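/- Let X ⊆ P^m × P^n be a finite set of distinct points having the (*)-property. Then for every point q_i × q'_j ∈ X, deg_X(q_i × q'_j) = (deg_{V_j}(q_i), deg_{W_i}(q'_j)). -/

import Mathlib

/- Common setup: finite sets of points in the multiprojective space
   `P^m x P^n` over a field `K` of characteristic zero, their bihomogeneous
   vanishing ideals, bigraded Hilbert functions, Kähler differents,
   separators, Cayley-Bacharach property and complete intersections. -/

open MvPolynomial

set_option maxHeartbeats 1000000
set_option synthInstance.maxHeartbeats 400000

noncomputable section

namespace MultiProjPoints

variable (K : Type) [Field K] [CharZero K] [DecidableEq K]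

/-- The bigraded coordinate ring `S = K[X_0,…,X_m,Y_0,…,Y_n]` of `P^m × P^n`. -/
abbrev BiRing (m n : ℕ) : Type := MvPolynomial (Fin (m+1) ⊕ Fin (n+1)) K

/-- The weights giving the bigrading: `deg X_i = (1,0)`, `deg Y_j = (0,1)`. -/
def biwt (m n : ℕ) : (Fin (m+1) ⊕ Fin (n+1)) → ℤ × ℤ :=
  Sum.elim (fun _ => ((1 : ℤ), (0 : ℤ))) (fun _ => ((0 : ℤ), (1 : ℤ)))

variable {m n : ℕ}

/-- A (representative of a) point of `P^m × P^n`. -/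
abbrev BiPt (m n : ℕ) : Type := (Fin (m+1) → K) × (Fin (n+1) → K)

/-- `F` is bihomogeneous of degree `d`. -/
def IsBihom (F : BiRing K m n) (d : ℤ × ℤ) : Prop :=
  IsWeightedHomogeneous (biwt m n) F d

/-- Evaluation of a polynomial at (a representative of) a point. -/
def evalB (p : BiPt K m n) (F : BiRing K m n) : K :=
  eval (Sum.elim p.1 p.2) F

/-- A finset of representatives is a good configuration of points of
`P^m × P^n`: all representatives are nonzero, and proportional
representatives coincide (so distinct elements are distinct projective
points, and images under the two projections behave correctly). -/
def GoodConfig (𝕏 : Finset (BiPt K m n)) : Prop :=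
  (∀ p ∈ 𝕏, p.1 ≠ 0 ∧ p.2 ≠ 0) ∧
  (∀ p ∈ 𝕏, ∀ q ∈ 𝕏, (∃ c : K, c ≠ 0 ∧ p.1 = c • q.1) → p.1 = q.1) ∧
  (∀ p ∈ 𝕏, ∀ q ∈ 𝕏, (∃ c : K, c ≠ 0 ∧ p.2 = c • q.2) → p.2 = q.2)

/-- The bihomogeneous vanishing ideal `I_𝕏` of a set of points. -/
def vIdealB (𝕏 : Finset (BiPt K m n)) : Ideal (BiRing K m n) :=
  Ideal.span {F | (∃ d, IsBihom K F d) ∧ ∀ p ∈ 𝕏, evalB K p F = 0}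

/-- The bihomogeneous vanishing ideal of a single point. -/
def ptIdealB (p : BiPt K m n) : Ideal (BiRing K m n) :=
  Ideal.span {F | (∃ d, IsBihom K F d) ∧ evalB K p F = 0}

/-- The degree-`d` piece of `S/I`. -/
def degPieceB (I : Ideal (BiRing K m n)) (d : ℤ × ℤ) :
    Submodule K (BiRing K m n ⧸ I) :=
  (weightedHomogeneousSubmodule K (biwt m n) d).map
    (Ideal.Quotient.mkₐ K I).toLinearMap

/-- The Hilbert function of `S/I`. -/
def HFI (I : Ideal (BiRing K m n)) (d : ℤ × ℤ) : ℕ :=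
  Module.finrank K (degPieceB K I d)

/-- The Hilbert function of a set of points in `P^m × P^n`. -/
def HFB (𝕏 : Finset (BiPt K m n)) (d : ℤ × ℤ) : ℕ :=
  HFI K (vIdealB K 𝕏) d

/-- The Hilbert function of a (bihomogeneous) ideal `J` of `R_𝕏 = S/I`. -/
def HFIdealB (I : Ideal (BiRing K m n)) (J : Ideal (BiRing K m n ⧸ I))
    (d : ℤ × ℤ) : ℕ :=
  Module.finrank K ↥((Submodule.restrictScalars K J) ⊓ degPieceB K I d)

/- ### Single projective space `P^N` -/

/-- The coordinate ring `K[X_0,…,X_N]` of `P^N`. -/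
abbrev PRing (N : ℕ) : Type := MvPolynomial (Fin (N+1)) K

/-- The standard grading on `K[X_0,…,X_N]` (with values in `ℤ`). -/
def wt1 (N : ℕ) : Fin (N+1) → ℤ := fun _ => 1

/-- `F` is homogeneous of degree `d`. -/
def IsHom1 {N : ℕ} (F : PRing K N) (d : ℤ) : Prop :=
  IsWeightedHomogeneous (wt1 N) F d

/-- A good finite set of representatives of points in `P^N`. -/
def GoodSet {N : ℕ} (Y : Finset (Fin (N+1) → K)) : Prop :=
  (∀ q ∈ Y, q ≠ 0) ∧
  (∀ p ∈ Y, ∀ q ∈ Y, (∃ c : K, c ≠ 0 ∧ p = c • q) → p = q)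

/-- The homogeneous vanishing ideal of a set of points in `P^N`. -/
def vIdeal1 {N : ℕ} (Y : Finset (Fin (N+1) → K)) : Ideal (PRing K N) :=
  Ideal.span {F | (∃ d, IsHom1 K F d) ∧ ∀ q ∈ Y, eval q F = 0}

/-- The degree-`d` piece of `K[X_0,…,X_N]/I`. -/
def degPiece1 {N : ℕ} (I : Ideal (PRing K N)) (d : ℤ) :
    Submodule K (PRing K N ⧸ I) :=
  (weightedHomogeneousSubmodule K (wt1 N) d).map
    (Ideal.Quotient.mkₐ K I).toLinearMap

/-- The Hilbert function of a set of points in `P^N`. -/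
def HF1 {N : ℕ} (Y : Finset (Fin (N+1) → K)) (d : ℤ) : ℕ :=
  Module.finrank K (degPiece1 K (vIdeal1 K Y) d)

/-- The Hilbert function of a homogeneous ideal of `K[X_0,…,X_N]/I`. -/
def HFIdeal1 {N : ℕ} (I : Ideal (PRing K N)) (J : Ideal (PRing K N ⧸ I))
    (d : ℤ) : ℕ :=
  Module.finrank K ↥((Submodule.restrictScalars K J) ⊓ degPiece1 K I d)

/-- The degree `deg_Y(q)` of a point `q` in `Y ⊆ P^N`: the minimal degree of
a homogeneous separator of `q` in `Y`. -/
def deg1 {N : ℕ} (Y : Finset (Fin (N+1) → K)) (q : Fin (N+1) → K) : ℕ :=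
  sInf {d : ℕ | ∃ F : PRing K N, IsHom1 K F (d : ℤ) ∧ eval q F ≠ 0 ∧
    ∀ q' ∈ Y, q' ≠ q → eval q' F = 0}

/-- The regularity index of the Hilbert function of `Y ⊆ P^N`. -/
def regIndex1 {N : ℕ} (Y : Finset (Fin (N+1) → K)) : ℕ :=
  sInf {r : ℕ | ∀ i : ℕ, r ≤ i → HF1 K Y (i : ℤ) = Y.card}

/-- `Y ⊆ P^N` is a Cayley-Bacharach scheme. -/
def IsCB1 {N : ℕ} (Y : Finset (Fin (N+1) → K)) : Prop :=
  ∀ q ∈ Y, deg1 K Y q = regIndex1 K Y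

/- ### Kähler differents -/

/-- The variables `X_1,…,X_m,Y_1,…,Y_n` indexed by `Fin (m+n)`. -/
def bvar (m n : ℕ) (v : Fin (m+n)) : Fin (m+1) ⊕ Fin (n+1) :=
  if h : (v : ℕ) < m then Sum.inl ⟨(v : ℕ) + 1, by omega⟩
  else Sum.inr ⟨(v : ℕ) - m + 1, by have hv := v.isLt; omega⟩

/-- The Kähler different of `R = S/I` w.r.t. a system of generators `F` of
`I`: the ideal generated by the `(m+n)×(m+n)`-minors of the Jacobian matrix
`(∂F_k/∂X_i, ∂F_k/∂Y_j)`. -/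
def kdiffB (I : Ideal (BiRing K m n)) {r : ℕ} (F : Fin r → BiRing K m n) :
    Ideal (BiRing K m n ⧸ I) :=
  Ideal.span (Set.range fun ρ : Fin (m+n) → Fin r =>
    Ideal.Quotient.mk I (Matrix.det (Matrix.of fun u v : Fin (m+n) =>
      pderiv (bvar m n v) (F (ρ u)))))

/-- The Kähler different of `K[X_0,…,X_N]/I` w.r.t. a system of generators
`F` of `I` (minors w.r.t. the variables `X_1,…,X_N`). -/
def kdiff1 {N : ℕ} (I : Ideal (PRing K N)) {r : ℕ} (F : Fin r → PRing K N) :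
    Ideal (PRing K N ⧸ I) :=
  Ideal.span (Set.range fun ρ : Fin N → Fin r =>
    Ideal.Quotient.mk I (Matrix.det (Matrix.of fun u v : Fin N =>
      pderiv (Fin.succ v) (F (ρ u)))))

/-- The extension `ϑ_{𝕏₁} R_𝕏` to `R_𝕏 = S/I` of the Kähler different of
`𝕏₁ ⊆ P^m` computed from a system of generators `F` of `I_{𝕏₁}`. -/
def kdiffExtL (I : Ideal (BiRing K m n)) {r : ℕ} (F : Fin r → PRing K m) :
    Ideal (BiRing K m n ⧸ I) :=
  Ideal.span (Set.range fun ρ : Fin m → Fin r =>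
    Ideal.Quotient.mk I (rename Sum.inl (Matrix.det (Matrix.of fun u v : Fin m =>
      pderiv (Fin.succ v) (F (ρ u))))))

/-- The extension `ϑ_{𝕏₂} R_𝕏` to `R_𝕏 = S/I` of the Kähler different of
`𝕏₂ ⊆ P^n` computed from a system of generators `G` of `I_{𝕏₂}`. -/
def kdiffExtR (I : Ideal (BiRing K m n)) {r : ℕ} (G : Fin r → PRing K n) :
    Ideal (BiRing K m n ⧸ I) :=
  Ideal.span (Set.range fun ρ : Fin n → Fin r =>
    Ideal.Quotient.mk I (rename Sum.inr (Matrix.det (Matrix.of fun u v : Fin n =>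
      pderiv (Fin.succ v) (G (ρ u))))))

/- ### Regular sequences, ACM, complete intersections -/

/-- `a, b` form a regular sequence. -/
def RegPair {A : Type*} [CommRing A] (a b : A) : Prop :=
  (∀ z : A, a * z = 0 → z = 0) ∧
  (∀ z : A, b * z ∈ Ideal.span {a} → z ∈ Ideal.span {a})

/-- The image `x₀` of `X_0` in `S/I`. -/
def x0B (I : Ideal (BiRing K m n)) : BiRing K m n ⧸ I :=
  Ideal.Quotient.mk I (MvPolynomial.X (Sum.inl 0))

/-- The image `y₀` of `Y_0` in `S/I`. -/
def y0B (I : Ideal (BiRing K m n)) : BiRing K m n ⧸ I :=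
  Ideal.Quotient.mk I (MvPolynomial.X (Sum.inr 0))

/-- The standing assumption for ACM sets of points: (after a change of
coordinates) `x₀, y₀` form a regular sequence in `R_𝕏`. -/
def ACMxy (𝕏 : Finset (BiPt K m n)) : Prop :=
  RegPair (x0B K (vIdealB K 𝕏)) (y0B K (vIdealB K 𝕏))

/-- `𝕏` is arithmetically Cohen-Macaulay: some bihomogeneous linear forms
`ℓ` of degree `(1,0)` and `ℓ'` of degree `(0,1)` give a regular sequence in
`R_𝕏` (for points this is equivalent to `depth R_𝕏 = 2`). -/
def IsACM (𝕏 : Finset (BiPt K m n)) : Prop :=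
  ∃ l l' : BiRing K m n, IsBihom K l (1, 0) ∧ IsBihom K l' (0, 1) ∧
    RegPair (Ideal.Quotient.mk (vIdealB K 𝕏) l) (Ideal.Quotient.mk (vIdealB K 𝕏) l')

/-- A regular sequence in a commutative ring, given as a list:
each entry is a non-zerodivisor modulo the preceding ones, and the list
generates a proper ideal. -/
def IsRegSeq {A : Type*} [CommRing A] (l : List A) : Prop :=
  (∀ (i : ℕ) (h : i < l.length), ∀ z : A,
      l.get ⟨i, h⟩ * z ∈ Ideal.span {x | x ∈ l.take i} →
      z ∈ Ideal.span {x | x ∈ l.take i}) ∧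
  Ideal.span {x | x ∈ l} ≠ ⊤

/-- `𝕏` is a complete intersection of type `(d_1,…,d_m,d'_1,…,d'_n)`. -/
def IsCIB (𝕏 : Finset (BiPt K m n)) (d : Fin m → ℕ) (d' : Fin n → ℕ) : Prop :=
  ∃ (F : Fin m → BiRing K m n) (G : Fin n → BiRing K m n),
    (∀ i, IsBihom K (F i) ((d i : ℤ), 0)) ∧
    (∀ j, IsBihom K (G j) (0, (d' j : ℤ))) ∧
    IsRegSeq (List.ofFn F ++ List.ofFn G) ∧
    Ideal.span (Set.range F ∪ Set.range G) = vIdealB K 𝕏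

/-- `Y ⊆ P^N` is a complete intersection of type `(d_1,…,d_N)`. -/
def IsCI1 {N : ℕ} (Y : Finset (Fin (N+1) → K)) (d : Fin N → ℕ) : Prop :=
  ∃ F : Fin N → PRing K N,
    (∀ i, IsHom1 K (F i) (d i : ℤ)) ∧
    IsRegSeq (List.ofFn F) ∧
    Ideal.span (Set.range F) = vIdeal1 K Y

/- ### Separators and the Cayley-Bacharach property -/

/-- `F` is a separator of `p` in `𝕏`. -/
def IsSepB (𝕏 : Finset (BiPt K m n)) (p : BiPt K m n) (F : BiRing K m n) : Prop :=
  evalB K p F ≠ 0 ∧ ∀ q ∈ 𝕏, q ≠ p → evalB K q F = 0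

/-- The set of degrees of bihomogeneous separators of `p` in `𝕏`. -/
def sepDegsB (𝕏 : Finset (BiPt K m n)) (p : BiPt K m n) : Set (ℤ × ℤ) :=
  {d | ∃ F, IsBihom K F d ∧ IsSepB K 𝕏 p F}

/-- `deg_𝕏(p)`: the set of degrees of minimal separators of `p` in `𝕏`
(mimimality w.r.t. the componentwise order). -/
def minSepDegsB (𝕏 : Finset (BiPt K m n)) (p : BiPt K m n) : Set (ℤ × ℤ) :=
  {d ∈ sepDegsB K 𝕏 p | ∀ d' ∈ sepDegsB K 𝕏 p, ¬ d' < d}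

/-- `𝕏` has the Cayley-Bacharach property: the Hilbert function of
`𝕏 \ {p}` is independent of the choice of `p ∈ 𝕏`. -/
def HasCB (𝕏 : Finset (BiPt K m n)) : Prop :=
  ∀ p ∈ 𝕏, ∀ q ∈ 𝕏, ∀ d : ℤ × ℤ, HFB K (𝕏.erase p) d = HFB K (𝕏.erase q) d

/- ### Star property and fibres -/

/-- The `(⋆)`-property. -/
def StarProp (𝕏 : Finset (BiPt K m n)) : Prop :=
  ∀ p ∈ 𝕏, ∀ q ∈ 𝕏, ((p.1, q.2) ∈ 𝕏 ∨ (q.1, p.2) ∈ 𝕏)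

/-- `V_j = π₁(π₂⁻¹(q'_j) ∩ 𝕏)` for `q'_j = p.2`. -/
def Vset (𝕏 : Finset (BiPt K m n)) (p : BiPt K m n) : Finset (Fin (m+1) → K) :=
  (𝕏.filter fun q => q.2 = p.2).image Prod.fst

/-- `W_i = π₂(π₁⁻¹(q_i) ∩ 𝕏)` for `q_i = p.1`. -/
def Wset (𝕏 : Finset (BiPt K m n)) (p : BiPt K m n) : Finset (Fin (n+1) → K) :=
  (𝕏.filter fun q => q.1 = p.1).image Prod.snd

end MultiProjPoints

/-! A separator of `q_i` in `V_j` and a separator of `q'_j` in `W_i` multiply to a separator of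
`q_i × q'_j` in `𝕏`: by the `(⋆)`-property, a point of `𝕏` that shares no component with
`q_i × q'_j` has its first component in `V_j` or its second in `W_i`. Conversely, fixing one block of variables of a separator of
`q_i × q'_j` at the coordinates of `q'_j` or `q_i` gives separators in `V_j` and `W_i`. Hence the
pair of the two degrees is the least element of the set of degrees of separators. -/

namespace MultiProjPoints

section WeightedHomogeneous

variable {R σ τ M M' : Type*} [CommSemiring R] [AddCommMonoid M] [AddCommMonoid M']

theorem nonneg_of_isWeightedHomogeneous [PartialOrder M] [IsOrderedAddMonoid M] {w : σ → M}
    (hw : ∀ i, 0 ≤ w i) {F : MvPolynomial σ R} (hF₀ : F ≠ 0) {d : M}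
    (hF : IsWeightedHomogeneous w F d) : 0 ≤ d := by
  obtain ⟨s, hs⟩ := ne_zero_iff.mp hF₀
  rw [← hF hs, Finsupp.weight_apply]
  exact Finset.sum_nonneg fun i _ ↦ nsmul_nonneg (hw i) _

theorem isWeightedHomogeneous_bind₁ {w : σ → M} {w' : τ → M'} {F : MvPolynomial σ R} {d : M}
    (hF : IsWeightedHomogeneous w F d) (φ : M →+ M') {g : σ → MvPolynomial τ R}
    (hg : ∀ i, IsWeightedHomogeneous w' (g i) (φ (w i))) :
    IsWeightedHomogeneous w' (bind₁ g F) (φ d) := by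
  rw [← aeval_eq_bind₁, aeval_def, eval₂_eq]
  refine IsWeightedHomogeneous.sum _ _ _ fun s hs ↦ IsWeightedHomogeneous.C_mul ?_ _
  rw [← hF (mem_support_iff.mp hs), Finsupp.weight_apply, map_finsuppSum]
  simp only [map_nsmul]
  exact IsWeightedHomogeneous.prod _ _ _ fun i _ ↦ (hg i).pow _

theorem isWeightedHomogeneous_rename {w : σ → M} {w' : τ → M'} {F : MvPolynomial σ R} {d : M}
    (hF : IsWeightedHomogeneous w F d) (φ : M →+ M') {f : σ → τ} (hf : ∀ i, w' (f i) = φ (w i)) :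
    IsWeightedHomogeneous w' (rename f F) (φ d) := by
  rw [rename_eq_aeval, aeval_eq_bind₁]
  exact isWeightedHomogeneous_bind₁ hF φ fun i ↦ hf i ▸ isWeightedHomogeneous_X R w' (f i)

end WeightedHomogeneous

theorem eval_bind₁ {R σ τ : Type*} [CommSemiring R] (a : τ → R) (g : σ → MvPolynomial τ R)
    (F : MvPolynomial σ R) :
    eval a (bind₁ g F) = eval (fun i ↦ eval a (g i)) F :=
  eval₂Hom_bind₁ _ _ _ _

variable {K : Type} {N m n : ℕ}

section Fibers

variable [DecidableEq K] {𝕏 : Finset (BiPt K m n)} {p : BiPt K m n}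

theorem mem_Vset {a : Fin (m + 1) → K} : a ∈ Vset K 𝕏 p ↔ (a, p.2) ∈ 𝕏 := by
  simp [Vset]

theorem mem_Wset {b : Fin (n + 1) → K} : b ∈ Wset K 𝕏 p ↔ (p.1, b) ∈ 𝕏 := by
  simp [Wset]

end Fibers

variable [Field K]

section Separators

variable {Y : Finset (Fin (N + 1) → K)} {q : Fin (N + 1) → K}

variable (K) in
/-- `F` is a separator of `q` in `Y ⊆ P^N`; the one-factor analogue of `IsSepB`, in terms of which
`deg1` is the least degree of a homogeneous separator. -/
def IsSep1 (Y : Finset (Fin (N + 1) → K)) (q : Fin (N + 1) → K) (F : PRing K N) : Prop :=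
  eval q F ≠ 0 ∧ ∀ q' ∈ Y, q' ≠ q → eval q' F = 0

theorem exists_isHom1_one_eval_eq (f : Module.Dual K (Fin (N + 1) → K)) :
    ∃ L : PRing K N, IsHom1 K L 1 ∧ ∀ x, eval x L = f x := by
  obtain ⟨c, rfl⟩ := (dotProductEquiv K (Fin (N + 1))).surjective f
  refine ⟨∑ i, C (c i) * X i, ?_, fun x ↦ by simp [dotProduct]⟩
  exact IsWeightedHomogeneous.sum _ _ _ fun i _ ↦ (isWeightedHomogeneous_X K (wt1 N) i).C_mul _

theorem exists_isHom1_one_of_notMem_span {q' : Fin (N + 1) → K}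
    (hq : q ∉ Submodule.span K {q'}) :
    ∃ L : PRing K N, IsHom1 K L 1 ∧ eval q L ≠ 0 ∧ eval q' L = 0 := by
  obtain ⟨f, hfq, hf⟩ := Submodule.exists_le_ker_of_notMem hq
  obtain ⟨L, hL, hLf⟩ := exists_isHom1_one_eval_eq f
  refine ⟨L, hL, by rwa [hLf], ?_⟩
  rw [hLf]
  exact hf (Submodule.mem_span_singleton_self q')

theorem exists_isHom1_isSep1 (hY : ∀ q' ∈ Y, q' ≠ q → q ∉ Submodule.span K {q'}) :
    ∃ d : ℕ, ∃ F : PRing K N, IsHom1 K F d ∧ IsSep1 K Y q F := by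
  classical
  choose! L hL hLq hLq' using fun q' hq' hne ↦ exists_isHom1_one_of_notMem_span (hY q' hq' hne)
  refine ⟨(Y.erase q).card, ∏ q' ∈ Y.erase q, L q', ?_, ?_, fun q' hq' hne ↦ ?_⟩
  · simpa [IsHom1] using IsWeightedHomogeneous.prod (Y.erase q) L (fun _ ↦ (1 : ℤ))
      fun q' hq' ↦ hL q' (Finset.mem_of_mem_erase hq') (Finset.ne_of_mem_erase hq')
  · rw [map_prod, Finset.prod_ne_zero_iff]
    exact fun q' hq' ↦ hLq q' (Finset.mem_of_mem_erase hq') (Finset.ne_of_mem_erase hq')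
  · rw [map_prod]
    exact Finset.prod_eq_zero (Finset.mem_erase.mpr ⟨hne, hq'⟩) (hLq' q' hq' hne)

theorem GoodSet.notMem_span_singleton (hY : GoodSet K Y) (hq : q ∈ Y) {q' : Fin (N + 1) → K}
    (hq' : q' ∈ Y) (hne : q' ≠ q) : q ∉ Submodule.span K {q'} := by
  rw [Submodule.mem_span_singleton]
  rintro ⟨c, hc⟩
  have hc₀ : c ≠ 0 := by
    rintro rfl
    exact hY.1 q hq (by rw [← hc, zero_smul])
  exact hne (hY.2 q hq q' hq' ⟨c, hc₀, hc.symm⟩).symm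

theorem GoodSet.exists_isHom1_deg1_isSep1 (hY : GoodSet K Y) (hq : q ∈ Y) :
    ∃ F : PRing K N, IsHom1 K F (deg1 K Y q) ∧ IsSep1 K Y q F :=
  Nat.sInf_mem (exists_isHom1_isSep1 fun _ ↦ hY.notMem_span_singleton hq)

theorem deg1_le_of_isHom1 {F : PRing K N} {d : ℤ} (hF : IsHom1 K F d) (hsep : IsSep1 K Y q F) :
    (deg1 K Y q : ℤ) ≤ d := by
  have hF₀ : F ≠ 0 := by
    rintro rfl
    exact hsep.1 (map_zero _)
  lift d to ℕ using nonneg_of_isWeightedHomogeneous (fun _ ↦ zero_le_one) hF₀ hF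
  have hle : deg1 K Y q ≤ d := Nat.sInf_le ⟨F, hF, hsep⟩
  exact_mod_cast hle

end Separators

section Specialization

/-- The specialization `F(X, b)` of a bihomogeneous form at a point `b` of the second factor; it
turns separators in `P^m × P^n` into separators in `P^m`. -/
def specializeSnd (b : Fin (n + 1) → K) : BiRing K m n →ₐ[K] PRing K m :=
  bind₁ (Sum.elim X fun j ↦ C (b j))

/-- The specialization `F(a, Y)` of a bihomogeneous form at a point `a` of the first factor; it
turns separators in `P^m × P^n` into separators in `P^n`. -/
def specializeFst (a : Fin (m + 1) → K) : BiRing K m n →ₐ[K] PRing K n :=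
  bind₁ (Sum.elim (fun i ↦ C (a i)) X)

theorem eval_specializeSnd (a : Fin (m + 1) → K) (b : Fin (n + 1) → K) (F : BiRing K m n) :
    eval a (specializeSnd b F) = evalB K (a, b) F := by
  rw [specializeSnd, evalB, eval_bind₁]
  congr 2
  ext (i | j) <;> simp

theorem eval_specializeFst (a : Fin (m + 1) → K) (b : Fin (n + 1) → K) (F : BiRing K m n) :
    eval b (specializeFst a F) = evalB K (a, b) F := by
  rw [specializeFst, evalB, eval_bind₁]
  congr 2
  ext (i | j) <;> simp

theorem IsBihom.isHom1_specializeSnd {F : BiRing K m n} {d : ℤ × ℤ} (hF : IsBihom K F d)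
    (b : Fin (n + 1) → K) : IsHom1 K (specializeSnd b F) d.1 := by
  refine isWeightedHomogeneous_bind₁ hF (AddMonoidHom.fst ℤ ℤ) (Sum.rec (fun i ↦ ?_) fun j ↦ ?_)
  · exact isWeightedHomogeneous_X K (wt1 m) i
  · exact isWeightedHomogeneous_C (wt1 m) (b j)

theorem IsBihom.isHom1_specializeFst {F : BiRing K m n} {d : ℤ × ℤ} (hF : IsBihom K F d)
    (a : Fin (m + 1) → K) : IsHom1 K (specializeFst a F) d.2 := by
  refine isWeightedHomogeneous_bind₁ hF (AddMonoidHom.snd ℤ ℤ) (Sum.rec (fun i ↦ ?_) fun j ↦ ?_)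
  · exact isWeightedHomogeneous_C (wt1 n) (a i)
  · exact isWeightedHomogeneous_X K (wt1 n) j

end Specialization

section Rename

theorem evalB_rename_inl (p : BiPt K m n) (F : PRing K m) :
    evalB K p (rename Sum.inl F) = eval p.1 F := by
  rw [evalB, eval_rename, Sum.elim_comp_inl]

theorem evalB_rename_inr (p : BiPt K m n) (G : PRing K n) :
    evalB K p (rename Sum.inr G) = eval p.2 G := by
  rw [evalB, eval_rename, Sum.elim_comp_inr]

theorem IsHom1.isBihom_rename_inl {F : PRing K m} {d : ℤ} (hF : IsHom1 K F d) :
    IsBihom K (rename Sum.inl F : BiRing K m n) (d, 0) :=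
  isWeightedHomogeneous_rename hF (AddMonoidHom.inl ℤ ℤ) fun _ ↦ rfl

theorem IsHom1.isBihom_rename_inr {G : PRing K n} {d : ℤ} (hG : IsHom1 K G d) :
    IsBihom K (rename Sum.inr G : BiRing K m n) (0, d) :=
  isWeightedHomogeneous_rename hG (AddMonoidHom.inr ℤ ℤ) fun _ ↦ rfl

theorem IsHom1.isBihom_rename_mul_rename {F : PRing K m} {G : PRing K n} {d e : ℤ}
    (hF : IsHom1 K F d) (hG : IsHom1 K G e) :
    IsBihom K (rename Sum.inl F * rename Sum.inr G : BiRing K m n) (d, e) := by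
  simpa [IsBihom] using hF.isBihom_rename_inl.mul hG.isBihom_rename_inr

end Rename

section Bidegree

variable {𝕏 : Finset (BiPt K m n)} {p : BiPt K m n}

theorem minSepDegsB_eq_singleton_of_isLeast {d : ℤ × ℤ} (hd : IsLeast (sepDegsB K 𝕏 p) d) :
    minSepDegsB K 𝕏 p = {d} := by
  refine Set.eq_singleton_iff_unique_mem.mpr ⟨⟨hd.1, fun e he ↦ (hd.2 he).not_gt⟩, ?_⟩
  exact fun e he ↦ ((hd.2 he.1).eq_of_not_lt (he.2 d hd.1)).symm

variable [DecidableEq K]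

theorem GoodConfig.goodSet_Vset (h𝕏 : GoodConfig K 𝕏) (p : BiPt K m n) :
    GoodSet K (Vset K 𝕏 p) :=
  ⟨fun _ ha ↦ (h𝕏.1 _ (mem_Vset.mp ha)).1,
    fun _ ha _ ha' ↦ h𝕏.2.1 _ (mem_Vset.mp ha) _ (mem_Vset.mp ha')⟩

theorem GoodConfig.goodSet_Wset (h𝕏 : GoodConfig K 𝕏) (p : BiPt K m n) :
    GoodSet K (Wset K 𝕏 p) :=
  ⟨fun _ hb ↦ (h𝕏.1 _ (mem_Wset.mp hb)).2,
    fun _ hb _ hb' ↦ h𝕏.2.2 _ (mem_Wset.mp hb) _ (mem_Wset.mp hb')⟩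

theorem IsSepB.isSep1_specializeSnd {F : BiRing K m n} (hF : IsSepB K 𝕏 p F) :
    IsSep1 K (Vset K 𝕏 p) p.1 (specializeSnd p.2 F) := by
  refine ⟨by rw [eval_specializeSnd]; exact hF.1, fun a ha hne ↦ ?_⟩
  rw [eval_specializeSnd]
  exact hF.2 _ (mem_Vset.mp ha) fun h ↦ hne (congrArg Prod.fst h)

theorem IsSepB.isSep1_specializeFst {F : BiRing K m n} (hF : IsSepB K 𝕏 p F) :
    IsSep1 K (Wset K 𝕏 p) p.2 (specializeFst p.1 F) := by
  refine ⟨by rw [eval_specializeFst]; exact hF.1, fun b hb hne ↦ ?_⟩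
  rw [eval_specializeFst]
  exact hF.2 _ (mem_Wset.mp hb) fun h ↦ hne (congrArg Prod.snd h)

theorem IsSep1.isSepB_rename_mul_rename (hstar : ∀ q ∈ 𝕏, (p.1, q.2) ∈ 𝕏 ∨ (q.1, p.2) ∈ 𝕏)
    {F : PRing K m} {G : PRing K n} (hF : IsSep1 K (Vset K 𝕏 p) p.1 F)
    (hG : IsSep1 K (Wset K 𝕏 p) p.2 G) :
    IsSepB K 𝕏 p (rename Sum.inl F * rename Sum.inr G) := by
  have evalB_mul (q : BiPt K m n) :
      evalB K q (rename Sum.inl F * rename Sum.inr G) = eval q.1 F * eval q.2 G := by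
    rw [← evalB_rename_inl q F, ← evalB_rename_inr q G]
    exact map_mul _ _ _
  refine ⟨by rw [evalB_mul]; exact mul_ne_zero hF.1 hG.1, fun q hq hne ↦ ?_⟩
  rw [evalB_mul]
  by_cases h₁ : q.1 = p.1
  · have h₂ : q.2 ≠ p.2 := fun h₂ ↦ hne (Prod.ext h₁ h₂)
    rw [hG.2 q.2 (mem_Wset.mpr (h₁ ▸ hq)) h₂, mul_zero]
  by_cases h₂ : q.2 = p.2
  · rw [hF.2 q.1 (mem_Vset.mpr (h₂ ▸ hq)) h₁, zero_mul]
  rcases hstar q hq with hW | hV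
  · rw [hG.2 q.2 (mem_Wset.mpr hW) h₂, mul_zero]
  · rw [hF.2 q.1 (mem_Vset.mpr hV) h₁, zero_mul]

theorem deg1_prod_mem_lowerBounds_sepDegsB :
    ((deg1 K (Vset K 𝕏 p) p.1 : ℤ), (deg1 K (Wset K 𝕏 p) p.2 : ℤ)) ∈
      lowerBounds (sepDegsB K 𝕏 p) := by
  rintro d ⟨F, hF, hsep⟩
  exact ⟨deg1_le_of_isHom1 (hF.isHom1_specializeSnd p.2) hsep.isSep1_specializeSnd,
    deg1_le_of_isHom1 (hF.isHom1_specializeFst p.1) hsep.isSep1_specializeFst⟩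

theorem deg1_prod_mem_sepDegsB (h𝕏 : GoodConfig K 𝕏) (hp : p ∈ 𝕏)
    (hstar : ∀ q ∈ 𝕏, (p.1, q.2) ∈ 𝕏 ∨ (q.1, p.2) ∈ 𝕏) :
    ((deg1 K (Vset K 𝕏 p) p.1 : ℤ), (deg1 K (Wset K 𝕏 p) p.2 : ℤ)) ∈ sepDegsB K 𝕏 p := by
  obtain ⟨F, hF, hFsep⟩ := (h𝕏.goodSet_Vset p).exists_isHom1_deg1_isSep1 (mem_Vset.mpr hp)
  obtain ⟨G, hG, hGsep⟩ := (h𝕏.goodSet_Wset p).exists_isHom1_deg1_isSep1 (mem_Wset.mpr hp)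
  exact ⟨_, hF.isBihom_rename_mul_rename hG, hFsep.isSepB_rename_mul_rename hstar hGsep⟩

end Bidegree

theorem statement_16_general (K : Type) [Field K] [DecidableEq K] (m n : ℕ)
    (𝕏 : Finset (BiPt K m n)) (hgood : GoodConfig K 𝕏) (p : BiPt K m n) (hp : p ∈ 𝕏)
    (hstar : ∀ q ∈ 𝕏, (p.1, q.2) ∈ 𝕏 ∨ (q.1, p.2) ∈ 𝕏) :
    IsLeast (sepDegsB K 𝕏 p)
      ((deg1 K (Vset K 𝕏 p) p.1 : ℤ), (deg1 K (Wset K 𝕏 p) p.2 : ℤ)) :=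
  ⟨deg1_prod_mem_sepDegsB hgood hp hstar, deg1_prod_mem_lowerBounds_sepDegsB⟩

end MultiProjPoints

open MultiProjPoints in
/-- Proposition 5.1: if `𝕏 ⊆ P^m × P^n` has the
`(⋆)`-property, then for every `q_i × q'_j ∈ 𝕏` one has
`deg_𝕏(q_i × q'_j) = (deg_{V_j}(q_i), deg_{W_i}(q'_j))`. -/
theorem statement_16 (K : Type) [Field K] [CharZero K] [DecidableEq K]
    (m n : ℕ) (𝕏 : Finset (BiPt K m n)) (hgood : GoodConfig K 𝕏)
    (hne : 𝕏.Nonempty) (hstar : StarProp K 𝕏) :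
    ∀ p ∈ 𝕏, minSepDegsB K 𝕏 p =
      {((deg1 K (Vset K 𝕏 p) p.1 : ℤ), (deg1 K (Wset K 𝕏 p) p.2 : ℤ))} :=
  fun p hp ↦
    minSepDegsB_eq_singleton_of_isLeast (statement_16_general K m n 𝕏 hgood p hp (hstar p hp))
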